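/- For every integer k ≥ 0 and every p ∈ (1, ∞) there exists a constant C = C(k, p) > 0 such that the following holds: for every g : (0, ∞) → ℝ of class C^k and every locally integrable f : (0, ∞) → ℝ of class C^(max(k−1,0)), writing F(x) = ∫₀^x f(y) dy, one has Σ_{j=0}^{k} ‖(g·F)^(j)‖_{L^p(0,∞)} ≤ C · ( Σ_{l=0}^{k} sup_{x>0} |x g^(l)(x)| · ‖f‖_{L^p(0,∞)} + [k ≥ 1] · (max_{0 ≤ l ≤ k−1} sup_{x>0} |g^(l)(x)|) · Σ_{i=0}^{k−1} ‖f^(i)‖_{L^p(0,∞)} ), where [k ≥ 1] is 1 if k ≥ 1 and 0 if k = 0, and the inequality is interpreted in [0, ∞]. -/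

import Mathlib

open MeasureTheory ENNReal

theorem lint_rpow_Ioo {a x : ℝ} (ha : -1 < a) (hx : 0 < x) :
    ∫⁻ y in Set.Ioo 0 x, ENNReal.ofReal (y ^ a) = ENNReal.ofReal (x ^ (a + 1) / (a + 1)) := by
  have hi : IntegrableOn (fun y : ℝ => y ^ a) (Set.Ioo 0 x) :=
    ((intervalIntegrable_iff_integrableOn_Ioo_of_le hx.le).1
      (intervalIntegral.intervalIntegrable_rpow' ha))
  rw [← ofReal_integral_eq_lintegral_ofReal hi]
  · congr 1
    rw [← integral_Ioc_eq_integral_Ioo, ← intervalIntegral.integral_of_le hx.le,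
      integral_rpow (Or.inl ha), Real.zero_rpow (by linarith), sub_zero]
  · filter_upwards [ae_restrict_mem measurableSet_Ioo] with y hy
    exact Real.rpow_nonneg hy.1.le _

theorem lint_rpow_Ioi {a x : ℝ} (ha : a < -1) (hx : 0 < x) :
    ∫⁻ y in Set.Ioi x, ENNReal.ofReal (y ^ a) = ENNReal.ofReal (x ^ (a + 1) / (-(a + 1))) := by
  rw [← ofReal_integral_eq_lintegral_ofReal (integrableOn_Ioi_rpow_of_lt ha hx)]
  · congr 1
    rw [integral_Ioi_rpow_of_lt ha hx, div_neg, neg_div]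
  · filter_upwards [ae_restrict_mem measurableSet_Ioi] with y hy
    exact Real.rpow_nonneg (hx.trans hy).le _

theorem hardy_step {p s : ℝ} (hp : 1 < p) (hs : s = 1 - 1 / p) {h : ℝ → ℝ≥0∞} (hh : Measurable h)
    {x : ℝ} (hx : 0 < x) :
    (ENNReal.ofReal x⁻¹ * ∫⁻ y in Set.Ioo 0 x, h y) ^ p ≤
      ENNReal.ofReal (s⁻¹ ^ (p - 1) * x ^ (-1 - s)) *
        ∫⁻ y in Set.Ioo 0 x, h y ^ p * ENNReal.ofReal (y ^ s) := by
  have hp0 : 0 < p := by linarith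
  have hs0 : 0 < s := by rw [hs, sub_pos, div_lt_one hp0]; exact hp
  have hpq : p.HolderConjugate s⁻¹ := by
    rw [Real.holderConjugate_iff]; refine ⟨hp, ?_⟩; rw [inv_inv, hs]; ring
  have hps : p * s = p - 1 := by rw [hs]; field_simp
  set r := s / p with hr
  have H := ENNReal.lintegral_mul_le_Lp_mul_Lq (volume.restrict (Set.Ioo 0 x)) hpq
    (f := fun y => h y * ENNReal.ofReal (y ^ r)) (g := fun y => ENNReal.ofReal (y ^ (-r)))
    (by fun_prop) (by fun_prop)
  have e0 : ∫⁻ y in Set.Ioo 0 x, h y = ∫⁻ y in Set.Ioo 0 x,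
      ((fun y => h y * ENNReal.ofReal (y ^ r)) * (fun y => ENNReal.ofReal (y ^ (-r)))) y := by
    refine setLIntegral_congr_fun measurableSet_Ioo fun y hy => ?_
    simp only [Pi.mul_apply]
    rw [mul_assoc, ← ENNReal.ofReal_mul (Real.rpow_nonneg hy.1.le _), ← Real.rpow_add hy.1]
    simp
  have e1 : ∫⁻ y in Set.Ioo 0 x, (h y * ENNReal.ofReal (y ^ r)) ^ p =
      ∫⁻ y in Set.Ioo 0 x, h y ^ p * ENNReal.ofReal (y ^ s) := by
    refine setLIntegral_congr_fun measurableSet_Ioo fun y hy => ?_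
    rw [ENNReal.mul_rpow_of_nonneg _ _ hp0.le,
      ENNReal.ofReal_rpow_of_nonneg (Real.rpow_nonneg hy.1.le _) hp0.le, ← Real.rpow_mul hy.1.le]
    congr 3; rw [hr]; field_simp
  have e2 : ∫⁻ y in Set.Ioo 0 x, (ENNReal.ofReal (y ^ (-r))) ^ s⁻¹ =
      ENNReal.ofReal (x ^ s / s) := by
    have : s = (-(1 / p)) + 1 := by rw [hs]; ring
    conv_rhs => rw [this]
    rw [← lint_rpow_Ioo (by linarith) hx]
    refine setLIntegral_congr_fun measurableSet_Ioo fun y hy => ?_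
    rw [ENNReal.ofReal_rpow_of_nonneg (Real.rpow_nonneg hy.1.le _) (by positivity),
      ← Real.rpow_mul hy.1.le]
    congr 2; rw [hr]; field_simp
  simp only [e1, e2] at H
  rw [← e0] at H
  set I := ∫⁻ y in Set.Ioo 0 x, h y ^ p * ENNReal.ofReal (y ^ s)
  calc _ ≤ (ENNReal.ofReal x⁻¹ * (I ^ (1 / p) * ENNReal.ofReal (x ^ s / s) ^ (1 / s⁻¹))) ^ p := by
        gcongr
    _ = _ := by
        have hxs : 0 ≤ x ^ s / s := by positivity
        rw [ENNReal.mul_rpow_of_nonneg _ _ hp0.le, ENNReal.mul_rpow_of_nonneg _ _ hp0.le,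
          ← ENNReal.rpow_mul, ← ENNReal.rpow_mul, one_div_mul_cancel hp0.ne', ENNReal.rpow_one,
          mul_comm I, ← mul_assoc, one_div, inv_inv, mul_comm s p, hps,
          ENNReal.ofReal_rpow_of_nonneg (by positivity) hp0.le,
          ENNReal.ofReal_rpow_of_nonneg hxs (by linarith),
          ← ENNReal.ofReal_mul (by positivity)]
        congr 2
        rw [div_eq_mul_inv, Real.mul_rpow (by positivity) (by positivity), ← Real.rpow_mul hx.le,
          Real.inv_rpow hx.le, ← Real.rpow_neg hx.le, ← mul_assoc, ← Real.rpow_add hx, mul_comm]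
        congr 2
        linarith

theorem hardy {p s : ℝ} (hp : 1 < p) (hs : s = 1 - 1 / p) {h : ℝ → ℝ≥0∞} (hh : Measurable h) :
    ∫⁻ x in Set.Ioi 0, (ENNReal.ofReal x⁻¹ * ∫⁻ y in Set.Ioo 0 x, h y) ^ p ≤
      ENNReal.ofReal (s⁻¹ ^ p) * ∫⁻ y in Set.Ioi 0, h y ^ p := by
  have hp0 : 0 < p := by linarith
  have hs0 : 0 < s := by rw [hs, sub_pos, div_lt_one hp0]; exact hp
  let K : ℝ → ℝ → ℝ≥0∞ := fun x y => 
    {z : ℝ × ℝ | z.2 < z.1}.indicator (fun z => ENNReal.ofReal (s⁻¹ ^ (p - 1) * z.1 ^ (-1 - s)) *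
      (h z.2 ^ p * ENNReal.ofReal (z.2 ^ s))) (x, y)
  have hK : Measurable (Function.uncurry K) := by
    have : Function.uncurry K = {z : ℝ × ℝ | z.2 < z.1}.indicator
      (fun z => ENNReal.ofReal (s⁻¹ ^ (p - 1) * z.1 ^ (-1 - s)) *
      (h z.2 ^ p * ENNReal.ofReal (z.2 ^ s))) := by ext ⟨a, b⟩; rfl
    rw [this]
    refine Measurable.indicator (by fun_prop) (measurableSet_lt measurable_snd measurable_fst)
  calc _ ≤ ∫⁻ x in Set.Ioi 0, ∫⁻ y in Set.Ioi 0, K x y := by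
        refine setLIntegral_mono' measurableSet_Ioi fun x hx => ?_
        refine (hardy_step hp hs hh hx).trans ?_
        rw [← lintegral_const_mul _ (by fun_prop), ← Set.Ioi_inter_Iio, Set.inter_comm,
          ← Measure.restrict_restrict measurableSet_Iio,
          ← lintegral_indicator measurableSet_Iio]
        refine le_of_eq (lintegral_congr fun y => ?_)
        by_cases hy : y < x <;> simp [K, Set.indicator, hy]
    _ = ∫⁻ y in Set.Ioi 0, ∫⁻ x in Set.Ioi 0, K x y :=
        lintegral_lintegral_swap hK.aemeasurable
    _ = ∫⁻ y in Set.Ioi 0, ENNReal.ofReal (s⁻¹ ^ p) * h y ^ p := by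
        refine setLIntegral_congr_fun measurableSet_Ioi fun y hy => ?_
        have hy : 0 < y := hy
        have e : ∫⁻ x in Set.Ioi 0, K x y = ∫⁻ x in Set.Ioi y, 
            (h y ^ p * ENNReal.ofReal (y ^ s * s⁻¹ ^ (p - 1))) * ENNReal.ofReal (x ^ (-1 - s)) := by
          have : Set.Ioi y = Set.Ioi y ∩ Set.Ioi 0 := by
            rw [Set.Ioi_inter_Ioi, max_eq_left hy.le]
          rw [this, ← Measure.restrict_restrict measurableSet_Ioi,
            ← lintegral_indicator (s := Set.Ioi y) measurableSet_Ioi]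
          refine setLIntegral_congr_fun (s := Set.Ioi (0:ℝ)) measurableSet_Ioi fun x hx => ?_
          by_cases hyx : y < x
          · simp only [K, Set.indicator, Set.mem_setOf_eq, hyx, if_true, Set.mem_Ioi]
            rw [ENNReal.ofReal_mul (by positivity), ENNReal.ofReal_mul (by positivity)]
            ring
          · simp [K, Set.indicator, hyx]
        rw [e, lintegral_const_mul _ (by fun_prop), lint_rpow_Ioi (by linarith) hy, mul_assoc,
          ← ENNReal.ofReal_mul (by positivity), mul_comm]
        congr 2
        have : -1 - s + 1 = -s := by ring
        rw [this, neg_neg, Real.rpow_neg hy.le, Real.rpow_sub_one (by positivity)]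
        have := Real.rpow_pos_of_pos hy s
        field_simp
    _ = _ := lintegral_const_mul _ (by fun_prop)

/-- The `L^p(0,∞)` norm as in the statement. -/
noncomputable def NN (p : ℝ) (u : ℝ → ℝ) : ℝ≥0∞ :=
  (∫⁻ x in Set.Ioi (0 : ℝ), ENNReal.ofReal (|u x| ^ p)) ^ (1 / p)

theorem ofReal_abs_rpow {p : ℝ} (hp : 0 ≤ p) (a : ℝ) :
    ENNReal.ofReal (|a| ^ p) = ‖a‖ₑ ^ p := by
  rw [← ENNReal.ofReal_rpow_of_nonneg (abs_nonneg _) hp, Real.enorm_eq_ofReal_abs]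

theorem NN_eq {p : ℝ} (hp : 0 < p) (u : ℝ → ℝ) :
    NN p u = (∫⁻ x in Set.Ioi (0 : ℝ), ‖u x‖ₑ ^ p) ^ (1 / p) := by
  simp only [NN, ofReal_abs_rpow hp.le]

theorem NN_eq' {p : ℝ} (hp : 0 < p) (u : ℝ → ℝ) :
    NN p u = eLpNorm u (ENNReal.ofReal p) (volume.restrict (Set.Ioi 0)) := by
  rw [eLpNorm_eq_lintegral_rpow_enorm_toReal (by simpa using hp) (by simp),
    ENNReal.toReal_ofReal hp.le, NN_eq hp]

theorem NN_congr {p : ℝ} {u v : ℝ → ℝ} (h : Set.EqOn u v (Set.Ioi 0)) : NN p u = NN p v := by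
  unfold NN
  congr 1
  exact setLIntegral_congr_fun measurableSet_Ioi fun x hx => by simp only [h hx]

theorem NN_le_mul {p : ℝ} (hp : 0 < p) {u v : ℝ → ℝ} {S : ℝ≥0∞}
    (hv : ContinuousOn v (Set.Ioi 0)) (h : ∀ x > 0, ‖u x‖ₑ ≤ S * ‖v x‖ₑ) :
    NN p u ≤ S * NN p v := by
  rw [NN_eq hp, NN_eq hp]
  have hm : AEMeasurable (fun x => ‖v x‖ₑ ^ p) (volume.restrict (Set.Ioi 0)) :=
    (hv.aemeasurable measurableSet_Ioi).enorm.pow_const _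
  have : S = (S ^ p) ^ (1 / p) := by
    rw [← ENNReal.rpow_mul, mul_one_div_cancel hp.ne', ENNReal.rpow_one]
  conv_rhs => rw [this]
  rw [← ENNReal.mul_rpow_of_nonneg _ _ (by positivity), ← lintegral_const_mul'' _ hm]
  gcongr 1
  refine setLIntegral_mono' measurableSet_Ioi fun x hx => ?_
  rw [← ENNReal.mul_rpow_of_nonneg _ _ hp.le]
  gcongr
  exact h x hx

theorem NN_sum_le {p : ℝ} (hp : 1 < p) (n : ℕ) (c : ℕ → ℕ) (u : ℕ → ℝ → ℝ)
    (hu : ∀ i ∈ Finset.range n, ContinuousOn (u i) (Set.Ioi 0)) :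
    NN p (fun x => ∑ i ∈ Finset.range n, (c i : ℝ) * u i x) ≤
      ∑ i ∈ Finset.range n, (c i : ℝ≥0∞) * NN p (u i) := by
  have hp0 : 0 < p := by linarith
  have e : (fun x => ∑ i ∈ Finset.range n, (c i : ℝ) * u i x) =
      ∑ i ∈ Finset.range n, (c i : ℝ) • u i := by
    ext x; simp [Finset.sum_apply]
  rw [e, NN_eq' hp0]
  refine (eLpNorm_sum_le (fun i hi => ?_) ?_).trans ?_
  · exact ((hu i hi).aestronglyMeasurable measurableSet_Ioi).const_smul _
  · simpa using hp.le
  · refine Finset.sum_le_sum fun i _ => ?_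
    rw [eLpNorm_const_smul, NN_eq' hp0, Real.enorm_natCast]

theorem NN_hardy {p : ℝ} (hp : 1 < p) {f : ℝ → ℝ} (hf : ContinuousOn f (Set.Ioi 0)) :
    NN p (fun x => x⁻¹ * ∫ y in Set.Ioo (0 : ℝ) x, f y) ≤
      ENNReal.ofReal (1 - 1 / p)⁻¹ * NN p f := by
  classical
  have hp0 : 0 < p := by linarith
  have hs0 : 0 < 1 - 1 / p := by rw [sub_pos, div_lt_one hp0]; exact hp
  rw [NN_eq hp0, NN_eq hp0]
  set f₀ : ℝ → ℝ := (Set.Ioi 0).piecewise f 0 with hf₀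
  have hm : Measurable f₀ := hf.measurable_piecewise continuousOn_const measurableSet_Ioi
  have hff : ∀ x > 0, f₀ x = f x := fun x hx => Set.piecewise_eq_of_mem _ _ _ hx
  have H := hardy hp rfl hm.enorm
  have e1 : ∫⁻ y in Set.Ioi 0, ‖f₀ y‖ₑ ^ p = ∫⁻ y in Set.Ioi 0, ‖f y‖ₑ ^ p :=
    setLIntegral_congr_fun measurableSet_Ioi fun x hx => by simp only [hff x hx]
  rw [e1] at H
  have e2 : ENNReal.ofReal (1 - 1 / p)⁻¹ = (ENNReal.ofReal ((1 - 1 / p)⁻¹ ^ p)) ^ (1 / p) := by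
    rw [← ENNReal.ofReal_rpow_of_nonneg (by positivity) hp0.le, ← ENNReal.rpow_mul,
      mul_one_div_cancel hp0.ne', ENNReal.rpow_one]
  rw [e2, ← ENNReal.mul_rpow_of_nonneg _ _ (by positivity)]
  gcongr 1
  refine le_trans (setLIntegral_mono' measurableSet_Ioi fun x hx => ?_) H
  have hx : 0 < x := hx
  gcongr
  rw [enorm_mul, Real.enorm_of_nonneg (by positivity : 0 ≤ x⁻¹)]
  gcongr
  refine (enorm_integral_le_lintegral_enorm _).trans (le_of_eq ?_)
  exact setLIntegral_congr_fun measurableSet_Ioo fun y hy => by simp only [hff y hy.1]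

theorem hasDerivAt_F {f : ℝ → ℝ} (hf : ContinuousOn f (Set.Ioi 0))
    (hi : ∀ x > 0, IntegrableOn f (Set.Ioo 0 x)) {x : ℝ} (hx : 0 < x) :
    HasDerivAt (fun x => ∫ y in Set.Ioo (0 : ℝ) x, f y) (f x) x := by
  have h1 : HasDerivAt (fun u => ∫ y in (0:ℝ)..u, f y) (f x) x :=
    intervalIntegral.integral_hasDerivAt_right
      ((intervalIntegrable_iff_integrableOn_Ioo_of_le hx.le).2 (hi x hx))
      (hf.stronglyMeasurableAtFilter isOpen_Ioi x hx) (hf.continuousAt (Ioi_mem_nhds hx))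
  refine h1.congr_of_eventuallyEq ?_
  filter_upwards [Ioi_mem_nhds hx] with y hy
  rw [intervalIntegral.integral_of_le (le_of_lt hy), integral_Ioc_eq_integral_Ioo]

theorem F_dichotomy {f : ℝ → ℝ} (hf : ContinuousOn f (Set.Ioi 0)) :
    (∀ x > 0, IntegrableOn f (Set.Ioo 0 x)) ∨ (∀ x > 0, ∫ y in Set.Ioo (0 : ℝ) x, f y = 0) := by
  by_cases h : ∃ x > 0, IntegrableOn f (Set.Ioo 0 x)
  · left
    obtain ⟨a, ha, hia⟩ := h
    intro x hx
    have h2 : IntegrableOn f (Set.Icc (a / 2) x) :=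
      (hf.mono fun y hy => lt_of_lt_of_le (by positivity) hy.1).integrableOn_compact isCompact_Icc
    refine (hia.union h2).mono_set fun y hy => ?_
    by_cases hya : y < a
    · exact Or.inl ⟨hy.1, hya⟩
    · exact Or.inr ⟨by linarith, hy.2.le⟩
  · right
    push Not at h
    exact fun x hx => integral_undef (h x hx)

theorem F_contDiff {f : ℝ → ℝ} {n : ℕ} (hf : ContDiffOn ℝ n f (Set.Ioi 0))
    (hi : ∀ x > 0, IntegrableOn f (Set.Ioo 0 x)) :
    ContDiffOn ℝ (n + 1 : ℕ) (fun x => ∫ y in Set.Ioo (0 : ℝ) x, f y) (Set.Ioi 0) := by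
  push_cast
  rw [contDiffOn_succ_iff_deriv_of_isOpen isOpen_Ioi]
  have hd := fun x (hx : x ∈ Set.Ioi (0:ℝ)) => hasDerivAt_F hf.continuousOn hi hx
  refine ⟨fun x hx => (hd x hx).differentiableAt.differentiableWithinAt, by simp, ?_⟩
  exact hf.congr fun x hx => (hd x hx).deriv

theorem F_iter {f : ℝ → ℝ} (hf : ContinuousOn f (Set.Ioi 0))
    (hi : ∀ x > 0, IntegrableOn f (Set.Ioo 0 x)) (n : ℕ) :
    Set.EqOn (iteratedDerivWithin (n + 1) (fun x => ∫ y in Set.Ioo (0 : ℝ) x, f y) (Set.Ioi 0))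
      (iteratedDerivWithin n f (Set.Ioi 0)) (Set.Ioi 0) := by
  rw [iteratedDerivWithin_succ']
  refine iteratedDerivWithin_congr fun x hx => ?_
  rw [derivWithin_of_isOpen isOpen_Ioi hx]
  exact (hasDerivAt_F hf hi hx).deriv

/-- Sobolev bound for `g(x)·∫₀^x f`: for `k ≥ 0`, `p ∈ (1,∞)` there is `C = C(k,p) > 0` such
that for `g ∈ C^k((0,∞))` and locally integrable `f ∈ C^(max(k−1,0))((0,∞))`, with
`F(x) = ∫₀^x f(y) dy`,
`Σ_{j≤k} ‖(gF)^(j)‖_{L^p} ≤ C·(Σ_{l≤k} sup_{x>0}|x g^(l)(x)|·‖f‖_{L^p}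
+ [k≥1]·(max_{l<k} sup_{x>0}|g^(l)(x)|)·Σ_{i<k} ‖f^(i)‖_{L^p})` (interpreted in `[0,∞]`). -/
theorem gIf_sobolev_bound (k : ℕ) (p : ℝ) (hp : 1 < p) :
    ∃ C > 0, ∀ g f : ℝ → ℝ,
      ContDiffOn ℝ k g (Set.Ioi 0) →
      ContDiffOn ℝ (max (k - 1) 0 : ℕ) f (Set.Ioi 0) →
      LocallyIntegrableOn f (Set.Ioi 0) →
      ∑ j ∈ Finset.range (k + 1),
          (∫⁻ x in Set.Ioi (0 : ℝ),
            ENNReal.ofReal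
              (|iteratedDerivWithin j (fun x => g x * ∫ y in Set.Ioo (0 : ℝ) x, f y)
                  (Set.Ioi 0) x| ^ p)) ^ (1 / p)
        ≤ ENNReal.ofReal C *
          ((∑ l ∈ Finset.range (k + 1),
              ⨆ x ∈ Set.Ioi (0 : ℝ),
                ENNReal.ofReal (|x * iteratedDerivWithin l g (Set.Ioi 0) x|)) *
              (∫⁻ x in Set.Ioi (0 : ℝ), ENNReal.ofReal (|f x| ^ p)) ^ (1 / p) +
            (if 1 ≤ k then (1 : ℝ≥0∞) else 0) *
              (⨆ l ∈ Finset.range k,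
                ⨆ x ∈ Set.Ioi (0 : ℝ),
                  ENNReal.ofReal (|iteratedDerivWithin l g (Set.Ioi 0) x|)) *
              ∑ i ∈ Finset.range k,
                (∫⁻ x in Set.Ioi (0 : ℝ),
                  ENNReal.ofReal (|iteratedDerivWithin i f (Set.Ioi 0) x| ^ p)) ^ (1 / p)) := by
  have hp0 : 0 < p := by linarith
  have hs0 : 0 < 1 - 1 / p := by rw [sub_pos, div_lt_one hp0]; exact hp
  have hs1 : 1 ≤ (1 - 1 / p)⁻¹ := by
    rw [one_le_inv₀ hs0]; have : 0 < 1 / p := by positivity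
    linarith
  set q := (1 - 1 / p)⁻¹ with hq
  let M : ℕ := ∑ j ∈ Finset.range (k + 1), ∑ i ∈ Finset.range (j + 1), j.choose i
  have hM : 0 < M := by
    refine Finset.sum_pos (fun j _ => ?_) ⟨0, by simp⟩
    rw [Nat.sum_range_choose]; positivity
  refine ⟨M * q, by positivity, ?_⟩
  intro g f hg hf _
  have hfc := hf.continuousOn
  have hU : UniqueDiffOn ℝ (Set.Ioi (0:ℝ)) := uniqueDiffOn_Ioi 0
  set F : ℝ → ℝ := fun x => ∫ y in Set.Ioo (0 : ℝ) x, f y with hF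
  set A : ℝ≥0∞ := ∑ l ∈ Finset.range (k + 1),
              ⨆ x ∈ Set.Ioi (0 : ℝ),
                ENNReal.ofReal (|x * iteratedDerivWithin l g (Set.Ioi 0) x|) with hA
  set B : ℝ≥0∞ := (⨆ l ∈ Finset.range k,
                ⨆ x ∈ Set.Ioi (0 : ℝ),
                  ENNReal.ofReal (|iteratedDerivWithin l g (Set.Ioi 0) x|)) with hB
  change ∑ j ∈ Finset.range (k + 1), NN p (iteratedDerivWithin j (fun x => g x * F x) (Set.Ioi 0))
    ≤ ENNReal.ofReal (M * q) * (A * NN p f + (if 1 ≤ k then (1 : ℝ≥0∞) else 0) * B *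
      ∑ i ∈ Finset.range k, NN p (iteratedDerivWithin i f (Set.Ioi 0)))
  set R := (A * NN p f + (if 1 ≤ k then (1 : ℝ≥0∞) else 0) * B *
      ∑ i ∈ Finset.range k, NN p (iteratedDerivWithin i f (Set.Ioi 0))) with hR
  rcases F_dichotomy hfc with hi | h0
  swap
  · have : ∀ j ∈ Finset.range (k + 1),
        NN p (iteratedDerivWithin j (fun x => g x * F x) (Set.Ioi 0)) = 0 := by
      intro j _
      have : NN p (iteratedDerivWithin j (fun x => g x * F x) (Set.Ioi 0)) = NN p (fun _ => 0) := by
        refine NN_congr fun x hx => ?_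
        rw [iteratedDerivWithin_congr (g := fun _ => (0:ℝ)) (fun y hy => ?_) hx]
        · simp
        · simp [hF, h0 y hy]
      rw [this, NN]
      simp [Real.zero_rpow hp0.ne', hp0]
    rw [Finset.sum_eq_zero this]
    exact zero_le
  have hFk : ContDiffOn ℝ k F (Set.Ioi 0) :=
    (F_contDiff hf hi).of_le (by norm_cast; have := le_max_left (k-1) 0; omega)
  have hgc : ∀ i ≤ k, ContinuousOn (iteratedDerivWithin i g (Set.Ioi 0)) (Set.Ioi 0) :=
    fun i hik => hg.continuousOn_iteratedDerivWithin (by exact_mod_cast hik) hU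
  have hFc : ∀ i ≤ k, ContinuousOn (iteratedDerivWithin i F (Set.Ioi 0)) (Set.Ioi 0) :=
    fun i hik => hFk.continuousOn_iteratedDerivWithin (by exact_mod_cast hik) hU
  have key : ∀ i m, i + m ≤ k → NN p (fun x => iteratedDerivWithin i g (Set.Ioi 0) x *
      iteratedDerivWithin m F (Set.Ioi 0) x) ≤ ENNReal.ofReal q * R := by
    intro i m him
    rcases m with _ | m
    · have h1 : NN p (fun x => iteratedDerivWithin i g (Set.Ioi 0) x *
          iteratedDerivWithin 0 F (Set.Ioi 0) x) ≤ A * NN p (fun x => x⁻¹ * F x) := by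
        refine NN_le_mul hp0 ?_ fun x hx => ?_
        · exact (continuousOn_inv₀.mono fun x hx => ne_of_gt hx).mul hFk.continuousOn
        · have e : iteratedDerivWithin i g (Set.Ioi 0) x * iteratedDerivWithin 0 F (Set.Ioi 0) x
              = (x * iteratedDerivWithin i g (Set.Ioi 0) x) * (x⁻¹ * F x) := by
            rw [iteratedDerivWithin_zero]
            have := hx.ne'
            field_simp
          rw [e, enorm_mul]
          gcongr
          rw [Real.enorm_eq_ofReal_abs]
          refine le_trans ?_ (Finset.single_le_sum (fun _ _ => zero_le)
            (Finset.mem_range.2 (by omega : i < k + 1)))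
          exact le_iSup₂ (f := fun x (_ : x ∈ Set.Ioi (0:ℝ)) =>
            ENNReal.ofReal |x * iteratedDerivWithin i g (Set.Ioi 0) x|) x hx
      calc _ ≤ _ := h1
        _ ≤ A * (ENNReal.ofReal q * NN p f) := by gcongr; exact NN_hardy hp hfc
        _ = ENNReal.ofReal q * (A * NN p f) := by ring
        _ ≤ _ := by gcongr; exact le_self_add
    · have hk : 1 ≤ k := by omega
      have h1 : NN p (fun x => iteratedDerivWithin i g (Set.Ioi 0) x *
          iteratedDerivWithin (m + 1) F (Set.Ioi 0) x) ≤
          B * NN p (iteratedDerivWithin (m + 1) F (Set.Ioi 0)) := by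
        refine NN_le_mul hp0 (hFc _ (by omega)) fun x hx => ?_
        rw [enorm_mul]
        gcongr
        rw [Real.enorm_eq_ofReal_abs]
        refine le_trans ?_ (le_iSup₂ (f := fun l (_ : l ∈ Finset.range k) =>
          ⨆ x ∈ Set.Ioi (0 : ℝ), ENNReal.ofReal (|iteratedDerivWithin l g (Set.Ioi 0) x|)) i
          (Finset.mem_range.2 (by omega)))
        exact le_iSup₂ (f := fun x (_ : x ∈ Set.Ioi (0:ℝ)) =>
            ENNReal.ofReal |iteratedDerivWithin i g (Set.Ioi 0) x|) x hx
      rw [NN_congr (F_iter hfc hi m)] at h1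
      calc _ ≤ _ := h1
        _ ≤ B * ∑ i ∈ Finset.range k, NN p (iteratedDerivWithin i f (Set.Ioi 0)) := by
          gcongr
          exact Finset.single_le_sum (f := fun i => NN p (iteratedDerivWithin i f (Set.Ioi 0)))
            (fun _ _ => zero_le) (Finset.mem_range.2 (by omega : m < k))
        _ ≤ R := by rw [hR, if_pos hk, one_mul]; exact le_add_self
        _ = 1 * R := (one_mul _).symm
        _ ≤ _ := by
          gcongr
          rw [← ENNReal.ofReal_one]
          exact ENNReal.ofReal_le_ofReal hs1
  calc _ ≤ ∑ j ∈ Finset.range (k + 1), ∑ i ∈ Finset.range (j + 1),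
          (j.choose i : ℝ≥0∞) * (ENNReal.ofReal q * R) := by
        refine Finset.sum_le_sum fun j hj => ?_
        have hjk : j ≤ k := by have := Finset.mem_range.1 hj; omega
        have e : NN p (iteratedDerivWithin j (fun x => g x * F x) (Set.Ioi 0)) =
            NN p (fun x => ∑ i ∈ Finset.range (j + 1), (j.choose i : ℝ) *
              (iteratedDerivWithin i g (Set.Ioi 0) x *
                iteratedDerivWithin (j - i) F (Set.Ioi 0) x)) := by
          refine NN_congr fun x hx => ?_
          have := iteratedDerivWithin_mul hx hU
            ((hg.of_le (by exact_mod_cast hjk : (j : WithTop ℕ∞) ≤ k)) x hx)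
            ((hFk.of_le (by exact_mod_cast hjk : (j : WithTop ℕ∞) ≤ k)) x hx)
          simp only [← mul_assoc]
          exact this
        rw [e]
        refine (NN_sum_le hp (j + 1) (fun i => j.choose i) _ fun i hi => ?_).trans ?_
        · have := Finset.mem_range.1 hi
          exact (hgc _ (by omega)).mul (hFc _ (by omega))
        · refine Finset.sum_le_sum fun i hi => ?_
          have := Finset.mem_range.1 hi
          gcongr
          exact key _ _ (by omega)
    _ = _ := by
        simp only [← Finset.sum_mul]
        rw [ENNReal.ofReal_mul (by positivity), ENNReal.ofReal_natCast, mul_assoc]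
        congr 1
        simp only [M]
        push_cast
        rfl
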